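/- Let 0 < α < 1. There exists a constant C > 0 such that for every Schwartz vector field u : ℝ³ → ℝ³ with div u = 0 and vorticity ω = curl u, the tensor product ω ⊗ u (the 3×3 matrix with entries ω^i u^j) satisfies ‖ω ⊗ u‖_{Ḃ^{1−α}_{2,2}} ≤ C (‖∇ω‖_{L²} ‖ω‖_{Ḃ^{−1−α}_{∞,∞}} + ‖ω‖_{Ḃ^{−α}_{∞,∞}} ‖ω‖_{L²}), the inequality holding in [0,∞]. -/

import Mathlib

open MeasureTheory Real Complex Filter Function
open scoped ENNReal FourierTransform SchwartzMap

noncomputable section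

/-- The properties of the radial smooth cutoff `χ` used to build the
Littlewood–Paley decomposition: smooth, compactly supported, radial,
`0 ≤ χ ≤ 1`, `χ = 1` on `{‖ξ‖ ≤ 3/4}` and `χ = 0` on `{‖ξ‖ > 4/3}`. -/
def IsLPCutoff {n : ℕ} (χ : EuclideanSpace ℝ (Fin n) → ℝ) : Prop :=
  ContDiff ℝ ((⊤ : ℕ∞) : WithTop ℕ∞) χ ∧ HasCompactSupport χ ∧
    (∀ ξ η, ‖ξ‖ = ‖η‖ → χ ξ = χ η) ∧ (∀ ξ, 0 ≤ χ ξ) ∧ (∀ ξ, χ ξ ≤ 1) ∧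
    (∀ ξ, ‖ξ‖ ≤ 3 / 4 → χ ξ = 1) ∧ (∀ ξ, 4 / 3 < ‖ξ‖ → χ ξ = 0)

/-- The low-frequency Littlewood–Paley projection `S_j f = 𝓕⁻¹(χ(·/2^j) 𝓕 f)`. -/
def Sproj {n : ℕ} (χ : EuclideanSpace ℝ (Fin n) → ℝ) (j : ℤ)
    (f : EuclideanSpace ℝ (Fin n) → ℂ) : EuclideanSpace ℝ (Fin n) → ℂ :=
  𝓕⁻ fun ξ => ((χ ((2 : ℝ) ^ (-j) • ξ) : ℝ) : ℂ) * 𝓕 f ξ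

/-- The Littlewood–Paley block `Δ_j f = 𝓕⁻¹(φ̂(·/2^j) 𝓕 f)`, where
`φ̂(ξ) = χ(ξ/2) - χ(ξ)`, i.e. `φ̂(ξ/2^j) = χ(ξ/2^(j+1)) - χ(ξ/2^j)`. -/
def Dproj {n : ℕ} (χ : EuclideanSpace ℝ (Fin n) → ℝ) (j : ℤ)
    (f : EuclideanSpace ℝ (Fin n) → ℂ) : EuclideanSpace ℝ (Fin n) → ℂ :=
  𝓕⁻ fun ξ => ((χ ((2 : ℝ) ^ (-(j + 1)) • ξ) - χ ((2 : ℝ) ^ (-j) • ξ) : ℝ) : ℂ) * 𝓕 f ξ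

/-- The `ℓ^q(ℤ)` norm of a sequence of extended nonnegative reals, with the usual
supremum modification for `q = ∞`. -/
def lqNorm (q : ℝ≥0∞) (a : ℤ → ℝ≥0∞) : ℝ≥0∞ :=
  if q = ∞ then ⨆ j, a j else (∑' j, a j ^ q.toReal) ^ (1 / q.toReal)

/-- The homogeneous Besov norm `‖f‖_{Ḃ^s_{p,q}}`, valued in `[0,∞]`. -/
def besovNorm {n : ℕ} (χ : EuclideanSpace ℝ (Fin n) → ℝ) (s : ℝ) (p q : ℝ≥0∞)
    (f : EuclideanSpace ℝ (Fin n) → ℂ) : ℝ≥0∞ :=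
  lqNorm q fun j => (2 : ℝ≥0∞) ^ ((j : ℝ) * s) * eLpNorm (Dproj χ j f) p volume
noncomputable section

/-- Abbreviation for the Euclidean space `ℝ³`. -/
abbrev E3 := EuclideanSpace ℝ (Fin 3)

/-- The partial derivative `∂ᵢ f` in the `i`-th coordinate direction. -/
def pd (i : Fin 3) (f : E3 → ℝ) : E3 → ℝ :=
  fun x => fderiv ℝ f x (EuclideanSpace.single i 1)

/-- The curl `∇ × u = (∂₂u³ - ∂₃u², ∂₃u¹ - ∂₁u³, ∂₁u² - ∂₂u¹)` of a vector field on `ℝ³`. -/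
def curl3 (u : Fin 3 → E3 → ℝ) : Fin 3 → E3 → ℝ :=
  ![fun x => pd 1 (u 2) x - pd 2 (u 1) x,
    fun x => pd 2 (u 0) x - pd 0 (u 2) x,
    fun x => pd 0 (u 1) x - pd 1 (u 0) x]

/-- The curl of a Schwartz vector field on `ℝ³`. -/
def curlS (u : Fin 3 → 𝓢(E3, ℝ)) : Fin 3 → E3 → ℝ :=
  curl3 fun i => ⇑(u i)

/-- The `L²` norm of a vector field (the `ℓ²` combination of the componentwise norms),
valued in `[0,∞]`. -/
def vecL2 (v : Fin 3 → E3 → ℝ) : ℝ≥0∞ :=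
  (∑ i : Fin 3, eLpNorm (v i) 2 volume ^ (2 : ℝ)) ^ (1 / 2 : ℝ)

/-- The `L²` norm `‖∇v‖_{L²}` of the gradient of a vector field,
`‖∇v‖_{L²}² = Σ_{i,j} ‖∂ᵢ vʲ‖_{L²}²`, valued in `[0,∞]`. -/
def gradL2 (v : Fin 3 → E3 → ℝ) : ℝ≥0∞ :=
  (∑ i : Fin 3, ∑ j : Fin 3, eLpNorm (pd i (v j)) 2 volume ^ (2 : ℝ)) ^ (1 / 2 : ℝ)

/-- The homogeneous Besov norm `‖v‖_{Ḃ^s_{∞,∞}} = sup_j 2^{js} ‖Δ_j v‖_{L^∞}` of a real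
vector field on `ℝ³`, taken as the maximum (supremum) over the components. -/
def vecBesovInf (χ : E3 → ℝ) (s : ℝ) (v : Fin 3 → E3 → ℝ) : ℝ≥0∞ :=
  ⨆ i : Fin 3, ⨆ j : ℤ,
    (2 : ℝ≥0∞) ^ ((j : ℝ) * s) * eLpNorm (Dproj χ j fun x => ((v i x : ℝ) : ℂ)) ⊤ volume

/-- The homogeneous Besov norm `Ḃ^s_{2,2}` of a 3×3-matrix field, as the `ℓ²`
combination of the componentwise Besov norms. -/
def matBesov22 (χ : E3 → ℝ) (s : ℝ) (m : Fin 3 → Fin 3 → E3 → ℝ) : ℝ≥0∞ :=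
  (∑ i : Fin 3, ∑ j : Fin 3,
      besovNorm χ s 2 2 (fun x => ((m i j x : ℝ) : ℂ)) ^ (2 : ℝ)) ^ (1 / 2 : ℝ)

/-- The `L²` norm of `Λ^α v`, where `Λ^α f = 𝓕⁻¹(|ξ|^α 𝓕 f)` acts componentwise on the
real vector field `v`, taken as the `ℓ²` combination of the componentwise norms. -/
def vecFracLapL2 (α : ℝ) (v : Fin 3 → E3 → ℝ) : ℝ≥0∞ :=
  (∑ i : Fin 3,
      eLpNorm (𝓕⁻ fun ξ => ((‖ξ‖ ^ α : ℝ) : ℂ) * 𝓕 (fun x => ((v i x : ℝ) : ℂ)) ξ) 2 volume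
        ^ (2 : ℝ)) ^ (1 / 2 : ℝ)

/-- The vortex-stretching integral `∫ ((ω·∇)u)·ω dx` of a Schwartz vector field `u`
with vorticity `ω = curl u`. -/
def vortexStretch (u : Fin 3 → 𝓢(E3, ℝ)) : ℝ :=
  ∫ x, ∑ j : Fin 3, (∑ i : Fin 3, curlS u i x * pd i (⇑(u j)) x) * curlS u j x

/-!
Telescoping `S_{k+1} f · S_{k+1} g - S_k f · S_k g = Δ_k f · S_{k+1} g + S_k f · Δ_k g` writes
`f g` as a sum of pieces with frequencies `≲ 2^k`. In `Δ_j (f g)` only the pieces with `k ≥ j - 2`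
survive, and summing them with the weight `2^{js}` costs a geometric series since `s > 0`. The
low-frequency factors grow at most like `2^{kα}` times the `Ḃ^{-α}_{∞,∞}` norm, whence
`‖f g‖_{Ḃ^s} ≲ ‖f‖_{Ḃ^{s+α}} ‖g‖_{Ḃ^{-α}_{∞,∞}} + ‖f‖_{Ḃ^{-α}_{∞,∞}} ‖g‖_{Ḃ^{s+α}}`.

Taking `f = ω^i`, `g = u^j` and `s = 1 - α`, it remains to express `u` through `ω`: for
divergence-free `u`, `Δ u^j = Σ_i ∂_i (∂_i u^j - ∂_j u^i)`, so on each dyadic block `u` is recovered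
from `ω` by a multiplier of order `-1`, which gains one derivative in every Besov norm. Plancherel
replaces the `Ḃ^0_{2,2}` norms by `L²` norms.
-/

open scoped NNReal Topology LineDeriv Laplacian

section Young

theorem lintegral_mul_rpow_le {X : Type*} [MeasurableSpace X] {μ : Measure X} {p : ℝ} (hp : 1 ≤ p)
    {f g : X → ℝ≥0∞} (hf : AEMeasurable f μ) (hg : AEMeasurable g μ) :
    (∫⁻ x, f x * g x ∂μ) ^ p ≤ (∫⁻ x, f x ∂μ) ^ (p - 1) * ∫⁻ x, f x * g x ^ p ∂μ := by
  have hp₀ : 0 < p := by linarith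
  have hp₁ : p⁻¹ ≤ 1 := inv_le_one_of_one_le₀ hp
  have holder := ENNReal.lintegral_mul_norm_pow_le hf (hf.mul (hg.pow_const p))
    (sub_nonneg.2 hp₁) (inv_nonneg.2 hp₀.le) (sub_add_cancel 1 p⁻¹)
  have split (x : X) : f x ^ (1 - p⁻¹) * (f x * g x ^ p) ^ p⁻¹ = f x * g x := by
    rw [ENNReal.mul_rpow_of_nonneg _ _ (by positivity), ENNReal.rpow_rpow_inv hp₀.ne', ← mul_assoc,
      ← ENNReal.rpow_add_of_nonneg _ _ (sub_nonneg.2 hp₁) (by positivity), sub_add_cancel,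
      ENNReal.rpow_one]
  simp only [Pi.mul_apply, split] at holder
  grw [holder]
  rw [ENNReal.mul_rpow_of_nonneg _ _ hp₀.le, ENNReal.rpow_inv_rpow hp₀.ne', ← ENNReal.rpow_mul,
    sub_mul, inv_mul_cancel₀ hp₀.ne', one_mul]

variable {G : Type*} [AddGroup G] [MeasurableSpace G] [MeasurableAdd₂ G] [MeasurableNeg G]
  {μ : Measure G} [SFinite μ] [μ.IsAddLeftInvariant]

theorem lintegral_lconvolution_rpow_le {p : ℝ} (hp : 1 ≤ p)
    {f g : G → ℝ≥0∞} (hf : Measurable f) (hg : Measurable g) :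
    ∫⁻ x, (f ⋆ₗ[μ] g) x ^ p ∂μ ≤ (∫⁻ x, f x ∂μ) ^ p * ∫⁻ x, g x ^ p ∂μ := by
  calc ∫⁻ x, (f ⋆ₗ[μ] g) x ^ p ∂μ
      ≤ ∫⁻ x, (∫⁻ y, f y ∂μ) ^ (p - 1) * ∫⁻ y, f y * g (-y + x) ^ p ∂μ ∂μ :=
        lintegral_mono fun x => lintegral_mul_rpow_le hp (by fun_prop) (by fun_prop)
    _ = (∫⁻ y, f y ∂μ) ^ (p - 1) * ∫⁻ y, f y * ∫⁻ x, g (-y + x) ^ p ∂μ ∂μ := by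
        rw [lintegral_const_mul _ (by fun_prop), lintegral_lintegral_swap (by fun_prop)]
        congr 2 with y
        rw [lintegral_const_mul _ (by fun_prop)]
    _ = (∫⁻ y, f y ∂μ) ^ (p - 1) * ((∫⁻ y, f y ∂μ) * ∫⁻ x, g x ^ p ∂μ) := by
        simp_rw [lintegral_add_left_eq_self (fun x => g x ^ p)]
        rw [lintegral_mul_const _ hf]
    _ = (∫⁻ x, f x ∂μ) ^ p * ∫⁻ x, g x ^ p ∂μ := by
        nth_rw 2 [← ENNReal.rpow_one (∫⁻ y, f y ∂μ)]
        rw [← mul_assoc, ← ENNReal.rpow_add_of_nonneg _ _ (by linarith) zero_le_one, sub_add_cancel]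

theorem lconvolution_le_mul_essSup {f g : G → ℝ≥0∞} (hf : Measurable f) (hg : Measurable g) :
    ∀ᵐ x ∂μ, (f ⋆ₗ[μ] g) x ≤ (∫⁻ y, f y ∂μ) * essSup g μ := by
  have bound : ∀ᵐ x ∂μ, ∀ᵐ y ∂μ, g (-y + x) ≤ essSup g μ := by
    rw [Measure.ae_ae_comm (p := fun x y => g (-y + x) ≤ essSup g μ)
      (measurableSet_le (by fun_prop) measurable_const)]
    exact .of_forall fun y =>
      (measurePreserving_add_left μ (-y)).quasiMeasurePreserving.ae (ENNReal.ae_le_essSup g)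
  filter_upwards [bound] with x hx
  rw [lconvolution_def, ← lintegral_mul_const _ hf]
  exact lintegral_mono_ae (hx.mono fun y hy => mul_le_mul_right hy _)

theorem eLpNorm_lconvolution_le {p : ℝ≥0∞} (hp : 1 ≤ p)
    {f g : G → ℝ≥0∞} (hf : Measurable f) (hg : Measurable g) :
    eLpNorm (f ⋆ₗ[μ] g) p μ ≤ (∫⁻ x, f x ∂μ) * eLpNorm g p μ := by
  rcases eq_or_ne p ∞ with rfl | hp_top
  · simpa [eLpNormEssSup] using
      essSup_le_of_ae_le _ (lconvolution_le_mul_essSup hf hg)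
  · have hp_one : 1 ≤ p.toReal := by simpa using ENNReal.toReal_mono hp_top hp
    have hp_zero : p ≠ 0 := (zero_lt_one.trans_le hp).ne'
    simp only [eLpNorm_eq_lintegral_rpow_enorm_toReal hp_zero hp_top, enorm_eq_self]
    grw [lintegral_lconvolution_rpow_le hp_one hf hg]
    rw [ENNReal.mul_rpow_of_nonneg _ _ (by positivity), ← ENNReal.rpow_mul,
      mul_one_div_cancel (by positivity), ENNReal.rpow_one]

end Young

section DyadicSequences

theorem lqNorm_eq_eLpNorm {q : ℝ≥0∞} (hq : q ≠ 0) (a : ℤ → ℝ≥0∞) :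
    lqNorm q a = eLpNorm a q Measure.count := by
  rcases eq_or_ne q ∞ with rfl | hq_top
  · simp [lqNorm, eLpNorm_exponent_top, eLpNormEssSup]
  · simp [lqNorm, hq_top, eLpNorm_eq_lintegral_rpow_enorm_toReal hq hq_top, lintegral_count]

theorem lqNorm_mono {q : ℝ≥0∞} {a b : ℤ → ℝ≥0∞} (h : ∀ j, a j ≤ b j) :
    lqNorm q a ≤ lqNorm q b := by
  unfold lqNorm
  split_ifs
  · exact iSup_mono h
  · gcongr with j
    exact h j

theorem lqNorm_add_le {q : ℝ≥0∞} (hq : 1 ≤ q) (a b : ℤ → ℝ≥0∞) :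
    lqNorm q (fun j => a j + b j) ≤ lqNorm q a + lqNorm q b := by
  simp only [lqNorm_eq_eLpNorm (zero_lt_one.trans_le hq).ne']
  exact eLpNorm_add_le (by fun_prop) (by fun_prop) hq

theorem lqNorm_sum_le {ι : Type*} {q : ℝ≥0∞} (hq : 1 ≤ q) (s : Finset ι) (a : ι → ℤ → ℝ≥0∞) :
    lqNorm q (fun j => ∑ i ∈ s, a i j) ≤ ∑ i ∈ s, lqNorm q (a i) := by
  simp only [lqNorm_eq_eLpNorm (zero_lt_one.trans_le hq).ne']
  simpa only [← Finset.sum_apply] using eLpNorm_sum_le (fun i _ => by fun_prop) hq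

theorem lqNorm_const_mul {q : ℝ≥0∞} (hq : q ≠ 0) (c : ℝ≥0∞) (a : ℤ → ℝ≥0∞) :
    lqNorm q (fun j => c * a j) = c * lqNorm q a := by
  unfold lqNorm
  split_ifs with hq_top
  · exact (ENNReal.mul_iSup c a).symm
  · have hq_pos : 0 < q.toReal := ENNReal.toReal_pos hq hq_top
    simp only [ENNReal.mul_rpow_of_nonneg _ _ hq_pos.le, ENNReal.tsum_mul_left]
    rw [ENNReal.mul_rpow_of_nonneg _ _ (by positivity), ← ENNReal.rpow_mul,
      mul_one_div_cancel hq_pos.ne', ENNReal.rpow_one]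

theorem two_rpow_add (x y : ℝ) : (2 : ℝ≥0∞) ^ (x + y) = 2 ^ x * 2 ^ y :=
  ENNReal.rpow_add _ _ two_ne_zero ENNReal.ofNat_ne_top

theorem lqNorm_weighted_le_of_le_tsum {q : ℝ≥0∞} (hq : 1 ≤ q) (s : ℝ) {c d w : ℤ → ℝ≥0∞}
    (h : ∀ j, c j ≤ ∑' k, w (j - k) * d k) :
    lqNorm q (fun j => 2 ^ (j * s) * c j) ≤
      (∑' n : ℤ, 2 ^ (n * s) * w n) * lqNorm q (fun k => 2 ^ (k * s) * d k) := by
  set W : ℤ → ℝ≥0∞ := fun n => 2 ^ (n * s) * w n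
  set D : ℤ → ℝ≥0∞ := fun k => 2 ^ (k * s) * d k
  have conv (j : ℤ) : 2 ^ (j * s) * c j ≤ (W ⋆ₗ[Measure.count] D) j := by
    grw [h j, lconvolution_comm, lconvolution_def, lintegral_count, ← ENNReal.tsum_mul_left]
    refine ENNReal.tsum_le_tsum fun k => le_of_eq ?_
    have : (j : ℝ) * s = k * s + (-k + j : ℤ) * s := by push_cast; ring
    rw [this, two_rpow_add, ← sub_eq_neg_add]
    simp only [W, D]
    ring
  grw [lqNorm_mono conv, lqNorm_eq_eLpNorm (zero_lt_one.trans_le hq).ne',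
    eLpNorm_lconvolution_le hq (by fun_prop) (by fun_prop), lintegral_count,
    ← lqNorm_eq_eLpNorm (zero_lt_one.trans_le hq).ne']

theorem tsum_two_rpow_Ici_ne_top {s : ℝ} (hs : s < 0) (N : ℤ) :
    ∑' n : ℤ, (2 : ℝ≥0∞) ^ (n * s) * (Set.Ici N).indicator 1 n ≠ ∞ := by
  have reindex : ∑' n : ℤ, (2 : ℝ≥0∞) ^ (n * s) * (Set.Ici N).indicator 1 n =
      ∑' m : ℕ, 2 ^ (N * s) * (2 ^ s) ^ m := by
    rw [← (add_right_injective N |>.comp Nat.cast_injective).tsum_eq]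
    · refine tsum_congr fun m => ?_
      simp [← ENNReal.rpow_mul_natCast, ← two_rpow_add]
      ring_nf
    · intro n hn
      have : N ≤ n := by by_contra h; simp [h] at hn
      exact ⟨(n - N).toNat, by simp [this]⟩
  have : (2 : ℝ≥0∞) ^ s < 1 := ENNReal.rpow_lt_one_of_one_lt_of_neg ENNReal.one_lt_two hs
  rw [reindex, ENNReal.tsum_mul_left, ENNReal.tsum_geometric]
  exact ENNReal.mul_ne_top (ENNReal.rpow_ne_top_of_ne_zero two_ne_zero ENNReal.ofNat_ne_top)
    (ENNReal.inv_ne_top.2 (tsub_pos_of_lt this).ne')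

theorem tsum_two_rpow_Iic_ne_top {s : ℝ} (hs : 0 < s) (N : ℤ) :
    ∑' n : ℤ, (2 : ℝ≥0∞) ^ (n * s) * (Set.Iic N).indicator 1 n ≠ ∞ := by
  rw [← (Equiv.neg ℤ).tsum_eq]
  convert tsum_two_rpow_Ici_ne_top (neg_neg_of_pos hs) (-N) using 4 with n
  · simp
  · simp [Set.indicator_apply, neg_le]

end DyadicSequences

section FourierMultipliers

open SchwartzMap

variable {V : Type*} [NormedAddCommGroup V] [InnerProductSpace ℝ V]

/-- The pointwise product of complex Schwartz functions, as a bilinear map. -/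
abbrev schwartzMul : 𝓢(V, ℂ) →ₗ[ℂ] 𝓢(V, ℂ) →L[ℂ] 𝓢(V, ℂ) :=
  pairing (ContinuousLinearMap.mul ℂ ℂ)

theorem schwartzMul_comm (f g : 𝓢(V, ℂ)) : schwartzMul f g = schwartzMul g f := by
  ext x
  simp [mul_comm]

/-- The dyadic dilation `ξ ↦ m (2⁻ᵏ ξ)` of a Schwartz function. -/
def dyadicDilate (k : ℤ) : 𝓢(V, ℂ) →L[ℂ] 𝓢(V, ℂ) :=
  compCLMOfContinuousLinearEquiv ℂ
    (ContinuousLinearEquiv.smulLeft (Units.mk0 ((2 : ℝ) ^ (-k)) (by positivity)))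

@[simp]
theorem dyadicDilate_apply (k : ℤ) (m : 𝓢(V, ℂ)) (ξ : V) :
    dyadicDilate k m ξ = m ((2 : ℝ) ^ (-k) • ξ) := rfl

variable [FiniteDimensional ℝ V] [MeasurableSpace V] [BorelSpace V]

/-- The Fourier multiplier whose symbol is the dyadic dilation `m (2⁻ᵏ ξ)` of a Schwartz
function `m`. -/
def dyadicMultiplier (m : 𝓢(V, ℂ)) (k : ℤ) : 𝓢(V, ℂ) →L[ℂ] 𝓢(V, ℂ) :=
  fourierMultiplierCLM ℂ (dyadicDilate k m)

theorem eLpNorm_schwartzMap_add_le {p : ℝ≥0∞} (hp : 1 ≤ p) (f g : 𝓢(V, ℂ)) :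
    eLpNorm (f + g : 𝓢(V, ℂ)) p volume ≤ eLpNorm f p volume + eLpNorm g p volume :=
  eLpNorm_add_le (by fun_prop) (by fun_prop) hp

theorem eLpNorm_schwartzMap_sum_le {ι : Type*} {p : ℝ≥0∞} (hp : 1 ≤ p) (s : Finset ι)
    (f : ι → 𝓢(V, ℂ)) :
    eLpNorm (∑ i ∈ s, f i : 𝓢(V, ℂ)) p volume ≤ ∑ i ∈ s, eLpNorm (f i) p volume := by
  rw [FunLike.coe_sum]
  exact eLpNorm_sum_le (fun _ _ => by fun_prop) hp

theorem fourier_fourierMultiplierCLM {m : V → ℂ} (hm : m.HasTemperateGrowth) (f : 𝓢(V, ℂ)) (ξ : V) :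
    𝓕 (fourierMultiplierCLM ℂ m f) ξ = m ξ * 𝓕 f ξ := by
  simp [fourierMultiplierCLM_apply, hm]

theorem fourier_dyadicMultiplier (m : 𝓢(V, ℂ)) (k : ℤ) (f : 𝓢(V, ℂ)) (ξ : V) :
    𝓕 (dyadicMultiplier m k f) ξ = m ((2 : ℝ) ^ (-k) • ξ) * 𝓕 f ξ :=
  fourier_fourierMultiplierCLM (dyadicDilate k m).hasTemperateGrowth f ξ

theorem schwartzMap_ext_fourier {f g : 𝓢(V, ℂ)} (h : ∀ ξ, 𝓕 f ξ = 𝓕 g ξ) : f = g :=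
  (FourierTransform.fourierCLE ℂ 𝓢(V, ℂ)).injective (SchwartzMap.ext h)

theorem coe_dyadicMultiplier (m : 𝓢(V, ℂ)) (k : ℤ) (f : 𝓢(V, ℂ)) :
    ⇑(dyadicMultiplier m k f) = 𝓕⁻ fun ξ => m ((2 : ℝ) ^ (-k) • ξ) * 𝓕 (f : V → ℂ) ξ := by
  have : ⇑(𝓕 (dyadicMultiplier m k f) : 𝓢(V, ℂ)) =
      fun ξ => m ((2 : ℝ) ^ (-k) • ξ) * 𝓕 (f : V → ℂ) ξ :=
    funext (fourier_dyadicMultiplier m k f)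
  rw [← this, ← fourierInv_coe, FourierTransform.fourierInv_fourier_eq]

theorem fourierMultiplierCLM_eq_convolution (m f : 𝓢(V, ℂ)) :
    fourierMultiplierCLM ℂ m f =
      SchwartzMap.convolution (ContinuousLinearMap.mul ℂ ℂ) (𝓕⁻ m) f := by
  refine schwartzMap_ext_fourier fun ξ => ?_
  rw [fourier_fourierMultiplierCLM m.hasTemperateGrowth, fourier_convolution]
  simp

theorem eLpNorm_fourierMultiplierCLM_le {p : ℝ≥0∞} (hp : 1 ≤ p) (m f : 𝓢(V, ℂ)) :
    eLpNorm (fourierMultiplierCLM ℂ m f) p volume ≤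
      eLpNorm (𝓕⁻ m : 𝓢(V, ℂ)) 1 volume * eLpNorm f p volume := by
  have pointwise (x : V) : ‖fourierMultiplierCLM ℂ m f x‖ₑ ≤
      ((‖𝓕⁻ m ·‖ₑ) ⋆ₗ[volume] (‖f ·‖ₑ)) x := by
    rw [fourierMultiplierCLM_eq_convolution, convolution_apply, lconvolution_def]
    refine (enorm_integral_le_lintegral_enorm _).trans_eq (lintegral_congr fun t => ?_)
    simp [enorm_mul, sub_eq_neg_add]
  calc eLpNorm (fourierMultiplierCLM ℂ m f) p volume
      ≤ eLpNorm ((‖𝓕⁻ m ·‖ₑ) ⋆ₗ[volume] (‖f ·‖ₑ)) p volume :=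
        eLpNorm_mono_enorm fun x => by simpa using pointwise x
    _ ≤ _ := by
        grw [eLpNorm_lconvolution_le hp (by fun_prop) (by fun_prop)]
        rw [eLpNorm_one_eq_lintegral_enorm, eLpNorm_enorm]

theorem fourierInv_dyadicDilate (m : 𝓢(V, ℂ)) (k : ℤ) (x : V) :
    𝓕⁻ (dyadicDilate k m) x = ((2 : ℝ) ^ k) ^ Module.finrank ℝ V • 𝓕⁻ m ((2 : ℝ) ^ k • x) := by
  have hpos : (0 : ℝ) < 2 ^ k := by positivity
  have change_of_variables := Measure.integral_comp_smul (volume : Measure V)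
    (fun ξ => Real.fourierChar (inner ℝ ξ ((2 : ℝ) ^ k • x)) • m ξ) ((2 : ℝ) ^ (-k))
  simp only [fourierInv_coe, Real.fourierInv_eq]
  convert change_of_variables using 1
  · simp [inner_smul_left, inner_smul_right, mul_inv_cancel_left₀ hpos.ne']
  · simp

theorem eLpNorm_one_fourierInv_dyadicDilate (m : 𝓢(V, ℂ)) (k : ℤ) :
    eLpNorm (𝓕⁻ (dyadicDilate k m) : 𝓢(V, ℂ)) 1 volume = eLpNorm (𝓕⁻ m : 𝓢(V, ℂ)) 1 volume := by
  have hpos : (0 : ℝ) < (2 ^ k) ^ Module.finrank ℝ V := by positivity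
  have change_of_variables : ∫⁻ x, ‖𝓕⁻ m ((2 : ℝ) ^ k • x)‖ₑ =
      ENNReal.ofReal ((2 ^ k) ^ Module.finrank ℝ V)⁻¹ * ∫⁻ x, ‖𝓕⁻ m x‖ₑ := by
    rw [← lintegral_map (f := (‖𝓕⁻ m ·‖ₑ)) (by fun_prop) (measurable_const_smul ((2 : ℝ) ^ k)),
      Measure.map_addHaar_smul _ (by positivity), lintegral_smul_measure,
      abs_of_pos (inv_pos.2 hpos), smul_eq_mul]
  simp only [eLpNorm_one_eq_lintegral_enorm, fourierInv_dyadicDilate, enorm_smul]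
  rw [lintegral_const_mul' _ _ (by simp), change_of_variables, Real.enorm_of_nonneg hpos.le,
    ← mul_assoc, ← ENNReal.ofReal_mul hpos.le, mul_inv_cancel₀ hpos.ne', ENNReal.ofReal_one,
    one_mul]

theorem eLpNorm_dyadicMultiplier_le {p : ℝ≥0∞} (hp : 1 ≤ p) (m : 𝓢(V, ℂ)) (k : ℤ) (f : 𝓢(V, ℂ)) :
    eLpNorm (dyadicMultiplier m k f) p volume ≤
      eLpNorm (𝓕⁻ m : 𝓢(V, ℂ)) 1 volume * eLpNorm f p volume := by
  rw [← eLpNorm_one_fourierInv_dyadicDilate m k]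
  exact eLpNorm_fourierMultiplierCLM_le hp _ f

theorem fourier_schwartzMul (f g : 𝓢(V, ℂ)) :
    𝓕 (schwartzMul f g) = SchwartzMap.convolution (ContinuousLinearMap.mul ℂ ℂ) (𝓕 f) (𝓕 g) := by
  have fourier_fourier (h : 𝓢(V, ℂ)) (x : V) : 𝓕 (𝓕 h) x = h (-x) := by
    have : 𝓕⁻ (𝓕 h) (-x) = h (-x) := by simp
    rw [← this, fourierInv_apply_eq]
    simp
  refine schwartzMap_ext_fourier fun x => ?_
  simp [fourier_convolution, fourier_fourier]

theorem fourier_schwartzMul_eq_zero {f g : 𝓢(V, ℂ)} {r s : ℝ} (hf : ∀ ξ, r < ‖ξ‖ → 𝓕 f ξ = 0)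
    (hg : ∀ ξ, s < ‖ξ‖ → 𝓕 g ξ = 0) {ξ : V} (hξ : r + s < ‖ξ‖) : 𝓕 (schwartzMul f g) ξ = 0 := by
  rw [fourier_schwartzMul, convolution_apply]
  refine integral_eq_zero_of_ae (.of_forall fun t => ?_)
  by_cases ht : r < ‖t‖
  · simp [hf t ht]
  · have : s < ‖ξ - t‖ := by linarith [norm_sub_norm_le ξ t]
    simp [hg _ this]

theorem eLpNorm_schwartzMul_le (p : ℝ≥0∞) (f g : 𝓢(V, ℂ)) :
    eLpNorm (schwartzMul f g) p volume ≤ eLpNorm f ⊤ volume * eLpNorm g p volume := by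
  have : ⇑(schwartzMul f g) = (f : V → ℂ) • (g : V → ℂ) := by ext x; simp
  rw [this]
  exact eLpNorm_smul_le_eLpNorm_top_mul_eLpNorm p g.continuous.aestronglyMeasurable (f : V → ℂ)

theorem eLpNorm_two_fourier (f : 𝓢(V, ℂ)) :
    eLpNorm (𝓕 f : 𝓢(V, ℂ)) 2 volume = eLpNorm f 2 volume := by
  have plancherel := norm_fourier_toL2_eq f
  rw [norm_toLp, norm_toLp] at plancherel
  exact (ENNReal.toReal_eq_toReal_iff' (eLpNorm_lt_top _ 2 volume).ne
    (eLpNorm_lt_top _ 2 volume).ne).1 plancherel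

theorem eLpNorm_top_le_lintegral_fourier (f : 𝓢(V, ℂ)) :
    eLpNorm f ⊤ volume ≤ ∫⁻ ξ, ‖𝓕 f ξ‖ₑ := by
  refine eLpNormEssSup_le_of_ae_enorm_bound (.of_forall fun x => ?_)
  have inversion : f x = 𝓕⁻ (𝓕 f) x := by simp
  rw [inversion, fourierInv_coe, Real.fourierInv_eq]
  exact (enorm_integral_le_lintegral_enorm _).trans_eq <|
    lintegral_congr fun ξ => enorm_eq_iff_norm_eq.2 (Circle.norm_smul _ _)

end FourierMultipliers

section Telescoping

open SchwartzMap

theorem edist_le_tsum_int_of_tendsto {α : Type*} [PseudoEMetricSpace α] {F : ℤ → α} {a b : α}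
    (ha : Tendsto F atBot (𝓝 a)) (hb : Tendsto F atTop (𝓝 b)) :
    edist a b ≤ ∑' k, edist (F k) (F (k + 1)) := by
  refine le_of_tendsto (ha.edist tendsto_const_nhds) (.of_forall fun m => ?_)
  have shift : Tendsto (fun n : ℕ => m + n) atTop atTop :=
    tendsto_atTop_add_const_left _ _ tendsto_natCast_atTop_atTop
  calc edist (F m) b = edist (F (m + (0 : ℕ))) b := by simp
    _ ≤ ∑' n : ℕ, edist (F (m + n)) (F (m + n + 1)) :=
        edist_le_tsum_of_edist_le_of_tendsto₀ (f := fun n : ℕ => F (m + n)) _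
          (fun n => by simp [add_assoc]) (hb.comp shift)
    _ ≤ ∑' k, edist (F k) (F (k + 1)) :=
        ENNReal.tsum_comp_le_tsum_of_injective
          ((add_right_injective m).comp Nat.cast_injective) fun k => edist (F k) (F (k + 1))

variable {V : Type*} [NormedAddCommGroup V] [InnerProductSpace ℝ V] [FiniteDimensional ℝ V]
  [MeasurableSpace V] [BorelSpace V]

theorem eLpNorm_le_tsum_int_of_tendsto {p : ℝ≥0∞} (hp : 1 ≤ p) {F : ℤ → 𝓢(V, ℂ)} {f : 𝓢(V, ℂ)}
    (hbot : Tendsto (fun k => eLpNorm (F k) p volume) atBot (𝓝 0))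
    (htop : Tendsto (fun k => eLpNorm (F k - f : 𝓢(V, ℂ)) p volume) atTop (𝓝 0)) :
    eLpNorm f p volume ≤ ∑' k, eLpNorm (F (k + 1) - F k : 𝓢(V, ℂ)) p volume := by
  have : Fact (1 ≤ p) := ⟨hp⟩
  have edist_toLp (g h : 𝓢(V, ℂ)) :
      edist (g.toLp p) (h.toLp p) = eLpNorm (g - h : 𝓢(V, ℂ)) p volume := by
    rw [Lp.edist_def]
    refine eLpNorm_congr_ae ?_
    filter_upwards [g.coeFn_toLp p, h.coeFn_toLp p] with x hg hh
    simp [hg, hh]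
  have lim_bot : Tendsto (fun k => (F k).toLp p) atBot (𝓝 ((0 : 𝓢(V, ℂ)).toLp p)) := by
    simpa only [tendsto_iff_edist_tendsto_0, edist_toLp, sub_zero] using hbot
  have lim_top : Tendsto (fun k => (F k).toLp p) atTop (𝓝 (f.toLp p)) := by
    simpa only [tendsto_iff_edist_tendsto_0, edist_toLp] using htop
  have telescope := edist_le_tsum_int_of_tendsto lim_bot lim_top
  simpa only [edist_comm ((0 : 𝓢(V, ℂ)).toLp p),
    fun k => edist_comm ((F k).toLp p) ((F (k + 1)).toLp p), edist_toLp, sub_zero] using telescope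

theorem tendsto_two_zpow_neg_atTop : Tendsto (fun k : ℤ => (2 : ℝ) ^ (-k)) atTop (𝓝 0) := by
  have := (tendsto_rpow_atBot_of_base_gt_one 2 one_lt_two).comp
    (tendsto_intCast_atBot_iff.2 tendsto_neg_atTop_atBot)
  exact this.congr fun k => Real.rpow_intCast 2 (-k)

theorem tendsto_two_zpow_neg_atBot : Tendsto (fun k : ℤ => (2 : ℝ) ^ (-k)) atBot atTop := by
  have := (tendsto_rpow_atTop_of_base_gt_one 2 one_lt_two).comp
    (tendsto_intCast_atTop_iff.2 tendsto_neg_atBot_atTop)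
  exact this.congr fun k => Real.rpow_intCast 2 (-k)

theorem tendsto_eLpNorm_top_dyadicMultiplier_sub {l : Filter ℤ} [l.IsCountablyGenerated]
    {m : 𝓢(V, ℂ)} {c : ℂ}
    (h : ∀ᵐ ξ : V, Tendsto (fun k : ℤ => m ((2 : ℝ) ^ (-k) • ξ)) l (𝓝 c)) (f : 𝓢(V, ℂ)) :
    Tendsto (fun k => eLpNorm (dyadicMultiplier m k f - c • f : 𝓢(V, ℂ)) ⊤ volume) l (𝓝 0) := by
  obtain ⟨M, hM⟩ : ∃ M, ∀ x, ‖m x‖ ≤ M := ⟨_, fun x => m.norm_le_seminorm ℂ x⟩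
  have symbol (k : ℤ) (ξ : V) : 𝓕 (dyadicMultiplier m k f - c • f) ξ =
      (m ((2 : ℝ) ^ (-k) • ξ) - c) * 𝓕 f ξ := by
    simp [sub_eq_add_neg, add_mul, FourierTransform.fourier_add, FourierTransform.fourier_neg,
      FourierTransform.fourier_smul, fourier_dyadicMultiplier]
  have lintegral_tendsto : Tendsto
      (fun k => ∫⁻ ξ, ‖𝓕 (dyadicMultiplier m k f - c • f) ξ‖ₑ) l (𝓝 (∫⁻ _ : V, 0)) := by
    refine tendsto_lintegral_filter_of_dominated_convergence
      (fun ξ => ENNReal.ofReal (M + ‖c‖) * ‖𝓕 f ξ‖ₑ) (.of_forall fun k => by fun_prop)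
      (.of_forall fun k => .of_forall fun ξ => ?_) ?_ (h.mono fun ξ hξ => ?_)
    · rw [symbol, enorm_mul, ← ofReal_norm (_ - c)]
      gcongr
      exact (norm_sub_le _ _).trans (by gcongr; exact hM _)
    · rw [lintegral_const_mul' _ _ ENNReal.ofReal_ne_top]
      exact ENNReal.mul_ne_top ENNReal.ofReal_ne_top (𝓕 f : 𝓢(V, ℂ)).integrable.2.ne
    · simp only [symbol]
      simpa using ((hξ.sub_const c).mul_const (𝓕 f ξ)).enorm
  rw [lintegral_zero] at lintegral_tendsto
  exact tendsto_of_tendsto_of_tendsto_of_le_of_le tendsto_const_nhds lintegral_tendsto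
    (fun _ => zero_le) fun _ => eLpNorm_top_le_lintegral_fourier _

theorem tendsto_eLpNorm_top_dyadicMultiplier_sub_atTop (m f : 𝓢(V, ℂ)) :
    Tendsto (fun k => eLpNorm (dyadicMultiplier m k f - m 0 • f : 𝓢(V, ℂ)) ⊤ volume) atTop
      (𝓝 0) := by
  refine tendsto_eLpNorm_top_dyadicMultiplier_sub (.of_forall fun ξ => ?_) f
  have := tendsto_two_zpow_neg_atTop.smul_const ξ
  rw [zero_smul] at this
  exact (m.continuous.tendsto 0).comp this

theorem tendsto_eLpNorm_top_dyadicMultiplier_atBot [Nontrivial V] (m f : 𝓢(V, ℂ)) :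
    Tendsto (fun k => eLpNorm (dyadicMultiplier m k f) ⊤ volume) atBot (𝓝 0) := by
  suffices ∀ᵐ ξ : V, Tendsto (fun k : ℤ => m ((2 : ℝ) ^ (-k) • ξ)) atBot (𝓝 0) by
    simpa using tendsto_eLpNorm_top_dyadicMultiplier_sub this f
  filter_upwards [compl_mem_ae_iff.2 (measure_singleton (0 : V))] with ξ hξ
  refine (zero_at_infty m).comp ?_
  rw [← Metric.cobounded_eq_cocompact, ← tendsto_norm_atTop_iff_cobounded]
  simpa [norm_smul] using tendsto_two_zpow_neg_atBot.atTop_mul_const (norm_pos_iff.2 hξ)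

end Telescoping

section LittlewoodPaley

open SchwartzMap

theorem norm_two_zpow_neg_smul {E : Type*} [NormedAddCommGroup E] [NormedSpace ℝ E] (k : ℤ)
    (ξ : E) : ‖(2 : ℝ) ^ (-k) • ξ‖ = ‖ξ‖ / 2 ^ k := by
  rw [norm_smul, norm_zpow, Real.norm_ofNat, zpow_neg, inv_mul_eq_div]

variable {n : ℕ} {χ : EuclideanSpace ℝ (Fin n) → ℝ}

local notation "𝔼" => EuclideanSpace ℝ (Fin n)

namespace IsLPCutoff

/-- The cutoff `χ` as a complex Schwartz function. -/
def symbol (hχ : IsLPCutoff χ) : 𝓢(𝔼, ℂ) :=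
  (hχ.2.1.comp_left (g := ((↑) : ℝ → ℂ)) ofReal_zero).toSchwartzMap
    (ofRealCLM.contDiff.comp hχ.1)

/-- The symbol `φ̂(ξ) = χ(ξ/2) - χ(ξ)` of the Littlewood–Paley block `Δ₀`. -/
def annulus (hχ : IsLPCutoff χ) : 𝓢(𝔼, ℂ) :=
  dyadicDilate 1 hχ.symbol - hχ.symbol

/-- The low-frequency projection `S_k` acting on Schwartz functions. -/
def lowPass (hχ : IsLPCutoff χ) (k : ℤ) : 𝓢(𝔼, ℂ) →L[ℂ] 𝓢(𝔼, ℂ) :=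
  dyadicMultiplier hχ.symbol k

/-- The Littlewood–Paley block `Δ_k` acting on Schwartz functions. -/
def block (hχ : IsLPCutoff χ) (k : ℤ) : 𝓢(𝔼, ℂ) →L[ℂ] 𝓢(𝔼, ℂ) :=
  dyadicMultiplier hχ.annulus k

variable (hχ : IsLPCutoff χ)

theorem symbol_apply (ξ : 𝔼) : hχ.symbol ξ = χ ξ := rfl

theorem symbol_eq_one {ξ : 𝔼} (hξ : ‖ξ‖ ≤ 3 / 4) : hχ.symbol ξ = 1 := by
  simp [symbol_apply, hχ.2.2.2.2.2.1 ξ hξ]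

theorem symbol_eq_zero {ξ : 𝔼} (hξ : 4 / 3 < ‖ξ‖) : hχ.symbol ξ = 0 := by
  simp [symbol_apply, hχ.2.2.2.2.2.2 ξ hξ]

theorem annulus_apply (ξ : 𝔼) : hχ.annulus ξ = hχ.symbol ((2 : ℝ)⁻¹ • ξ) - hχ.symbol ξ := by
  simp [annulus]

theorem annulus_eq_zero_of_le {ξ : 𝔼} (hξ : ‖ξ‖ ≤ 3 / 4) : hχ.annulus ξ = 0 := by
  have : ‖(2 : ℝ)⁻¹ • ξ‖ ≤ 3 / 4 := by
    rw [norm_smul, norm_inv, Real.norm_ofNat]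
    linarith [norm_nonneg ξ]
  rw [annulus_apply, hχ.symbol_eq_one hξ, hχ.symbol_eq_one this, sub_self]

theorem annulus_eq_zero_of_lt {ξ : 𝔼} (hξ : 8 / 3 < ‖ξ‖) : hχ.annulus ξ = 0 := by
  have : 4 / 3 < ‖(2 : ℝ)⁻¹ • ξ‖ := by
    rw [norm_smul, norm_inv, Real.norm_ofNat]
    linarith
  rw [annulus_apply, hχ.symbol_eq_zero this, hχ.symbol_eq_zero (by linarith), sub_self]

theorem coe_block (k : ℤ) (f : 𝓢(𝔼, ℂ)) : ⇑(hχ.block k f) = Dproj χ k f := by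
  rw [block, coe_dyadicMultiplier, Dproj]
  congr! 3 with ξ
  rw [annulus_apply, smul_smul, ← zpow_neg_one, ← zpow_add₀ two_ne_zero, neg_add_rev, ofReal_sub]
  rfl

theorem besovNorm_eq_lqNorm_block (s : ℝ) (p q : ℝ≥0∞) (f : 𝓢(𝔼, ℂ)) :
    besovNorm χ s p q f = lqNorm q fun j => 2 ^ (j * s) * eLpNorm (hχ.block j f) p volume := by
  simp only [besovNorm, coe_block]

theorem block_eq_lowPass_sub (k : ℤ) (f : 𝓢(𝔼, ℂ)) :
    hχ.block k f = hχ.lowPass (k + 1) f - hχ.lowPass k f := by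
  refine schwartzMap_ext_fourier fun ξ => ?_
  simp only [sub_eq_add_neg, FourierTransform.fourier_add, FourierTransform.fourier_neg, add_apply,
    neg_apply, block, lowPass, fourier_dyadicMultiplier, annulus_apply, smul_smul]
  rw [← zpow_neg_one, ← zpow_add₀ two_ne_zero, neg_add_rev]
  ring

theorem fourier_lowPass_eq_zero {k : ℤ} {ξ : 𝔼} (hξ : 4 / 3 * 2 ^ k < ‖ξ‖) (f : 𝓢(𝔼, ℂ)) :
    𝓕 (hχ.lowPass k f) ξ = 0 := by
  rw [lowPass, fourier_dyadicMultiplier, hχ.symbol_eq_zero, zero_mul]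
  rwa [norm_two_zpow_neg_smul, lt_div_iff₀ (by positivity)]

theorem block_eq_zero {j : ℤ} {f : 𝓢(𝔼, ℂ)} (hf : ∀ ξ, 3 / 4 * 2 ^ j < ‖ξ‖ → 𝓕 f ξ = 0) :
    hχ.block j f = 0 := by
  refine schwartzMap_ext_fourier fun ξ => ?_
  rw [block, fourier_dyadicMultiplier, FourierTransform.fourier_zero, zero_apply, mul_eq_zero]
  by_cases hξ : 3 / 4 * 2 ^ j < ‖ξ‖
  · exact .inr (hf ξ hξ)
  · refine .inl (hχ.annulus_eq_zero_of_le ?_)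
    rw [norm_two_zpow_neg_smul, div_le_iff₀ (by positivity)]
    exact not_lt.1 hξ

theorem eLpNorm_lowPass_le {p : ℝ≥0∞} (hp : 1 ≤ p) (k : ℤ) (f : 𝓢(𝔼, ℂ)) :
    eLpNorm (hχ.lowPass k f) p volume ≤
      eLpNorm (𝓕⁻ hχ.symbol : 𝓢(𝔼, ℂ)) 1 volume * eLpNorm f p volume :=
  eLpNorm_dyadicMultiplier_le hp _ _ _

theorem eLpNorm_block_le {p : ℝ≥0∞} (hp : 1 ≤ p) (k : ℤ) (f : 𝓢(𝔼, ℂ)) :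
    eLpNorm (hχ.block k f) p volume ≤
      eLpNorm (𝓕⁻ hχ.annulus : 𝓢(𝔼, ℂ)) 1 volume * eLpNorm f p volume :=
  eLpNorm_dyadicMultiplier_le hp _ _ _

theorem tendsto_lowPass_atTop (f : 𝓢(𝔼, ℂ)) :
    Tendsto (fun k => eLpNorm (hχ.lowPass k f - f : 𝓢(𝔼, ℂ)) ⊤ volume) atTop (𝓝 0) := by
  have symbol_zero : hχ.symbol 0 = 1 := hχ.symbol_eq_one (by norm_num)
  have := tendsto_eLpNorm_top_dyadicMultiplier_sub_atTop hχ.symbol f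
  rwa [symbol_zero, one_smul] at this

theorem tendsto_lowPass_atBot [NeZero n] (f : 𝓢(𝔼, ℂ)) :
    Tendsto (fun k => eLpNorm (hχ.lowPass k f) ⊤ volume) atBot (𝓝 0) :=
  tendsto_eLpNorm_top_dyadicMultiplier_atBot hχ.symbol f

theorem eLpNorm_top_lowPass_le_tsum [NeZero n] (k : ℤ) (f : 𝓢(𝔼, ℂ)) :
    eLpNorm (hχ.lowPass k f) ⊤ volume ≤
      ∑' l, (Set.Ici 1).indicator 1 (k - l) * eLpNorm (hχ.block l f) ⊤ volume := by
  have hbot : Tendsto (fun l => eLpNorm (hχ.lowPass (min l k) f) ⊤ volume) atBot (𝓝 0) := by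
    refine (hχ.tendsto_lowPass_atBot f).congr' ?_
    filter_upwards [eventually_le_atBot k] with l hl
    rw [min_eq_left hl]
  have htop : Tendsto (fun l =>
      eLpNorm (hχ.lowPass (min l k) f - hχ.lowPass k f : 𝓢(𝔼, ℂ)) ⊤ volume) atTop (𝓝 0) := by
    refine tendsto_const_nhds.congr' ?_
    filter_upwards [eventually_ge_atTop k] with l hl
    simp [min_eq_right hl]
  refine (eLpNorm_le_tsum_int_of_tendsto le_top hbot htop).trans_eq (tsum_congr fun l => ?_)
  rcases lt_or_ge l k with hl | hl
  · have : k - l ∈ Set.Ici 1 := Set.mem_Ici.2 (by lia)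
    rw [min_eq_left hl.le, min_eq_left (Int.add_one_le_of_lt hl), block_eq_lowPass_sub,
      Set.indicator_of_mem this, Pi.one_apply, one_mul]
  · have : k - l ∉ Set.Ici 1 := fun h => by have := Set.mem_Ici.1 h; lia
    rw [min_eq_right hl, min_eq_right (by lia), Set.indicator_of_notMem this]
    simp

theorem exists_eLpNorm_top_lowPass_le [NeZero n] {α : ℝ} (hα : 0 < α) :
    ∃ C : ℝ≥0, ∀ (k : ℤ) (f : 𝓢(𝔼, ℂ)),
      2 ^ (k * -α) * eLpNorm (hχ.lowPass k f) ⊤ volume ≤ C * besovNorm χ (-α) ∞ ∞ f := by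
  lift ∑' m : ℤ, (2 : ℝ≥0∞) ^ (m * -α) * (Set.Ici 1).indicator 1 m to ℝ≥0 using
    tsum_two_rpow_Ici_ne_top (neg_neg_of_pos hα) 1 with C hC
  refine ⟨C, fun k f => ?_⟩
  have := lqNorm_weighted_le_of_le_tsum le_top (-α) (hχ.eLpNorm_top_lowPass_le_tsum · f)
  rw [← hC, ← besovNorm_eq_lqNorm_block] at this
  refine le_trans ?_ this
  simpa [lqNorm] using le_iSup (fun j : ℤ =>
    (2 : ℝ≥0∞) ^ (j * -α) * eLpNorm (hχ.lowPass j f) ⊤ volume) k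

end IsLPCutoff

end LittlewoodPaley

section ProductEstimate

open SchwartzMap

variable {n : ℕ} {χ : EuclideanSpace ℝ (Fin n) → ℝ}

local notation "𝔼" => EuclideanSpace ℝ (Fin n)

namespace IsLPCutoff

variable (hχ : IsLPCutoff χ)

/-- The product `S_k f · S_k g` of low-frequency projections. -/
def lowPassMul (k : ℤ) (f g : 𝓢(𝔼, ℂ)) : 𝓢(𝔼, ℂ) :=
  schwartzMul (hχ.lowPass k f) (hχ.lowPass k g)

theorem lowPassMul_succ_sub (k : ℤ) (f g : 𝓢(𝔼, ℂ)) :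
    hχ.lowPassMul (k + 1) f g - hχ.lowPassMul k f g =
      schwartzMul (hχ.block k f) (hχ.lowPass (k + 1) g) +
        schwartzMul (hχ.lowPass k f) (hχ.block k g) := by
  simp [lowPassMul, block_eq_lowPass_sub]

theorem block_lowPassMul_eq_zero {j k : ℤ} (hjk : k + 2 ≤ j) (f g : 𝓢(𝔼, ℂ)) :
    hχ.block j (hχ.lowPassMul k f g) = 0 := by
  refine hχ.block_eq_zero fun ξ hξ => ?_
  refine fourier_schwartzMul_eq_zero (fun η hη => hχ.fourier_lowPass_eq_zero hη f)
    (fun η hη => hχ.fourier_lowPass_eq_zero hη g) (lt_of_le_of_lt ?_ hξ)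
  have : (2 : ℝ) ^ (k + 2) ≤ 2 ^ j := zpow_le_zpow_right₀ one_le_two hjk
  rw [zpow_add₀ two_ne_zero] at this
  have : (0 : ℝ) < 2 ^ k := by positivity
  linarith

theorem tendsto_lowPassMul_atTop {p : ℝ≥0∞} (hp : 1 ≤ p) (f g : 𝓢(𝔼, ℂ)) :
    Tendsto (fun k => eLpNorm (hχ.lowPassMul k f g - schwartzMul f g : 𝓢(𝔼, ℂ)) p volume) atTop
      (𝓝 0) := by
  set K := eLpNorm (𝓕⁻ hχ.symbol : 𝓢(𝔼, ℂ)) 1 volume * eLpNorm g p volume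
  have hK : K ≠ ∞ :=
    ENNReal.mul_ne_top (eLpNorm_lt_top _ _ _).ne (eLpNorm_lt_top _ _ _).ne
  have split (k : ℤ) : hχ.lowPassMul k f g - schwartzMul f g =
      schwartzMul (hχ.lowPass k f - f) (hχ.lowPass k g) +
        schwartzMul (hχ.lowPass k g - g) f := by
    ext x
    simp [lowPassMul]
    ring
  have bound_tendsto := (ENNReal.Tendsto.mul_const (hχ.tendsto_lowPass_atTop f) (.inr hK)).add
    (ENNReal.Tendsto.mul_const (hχ.tendsto_lowPass_atTop g)
      (.inr (f.eLpNorm_lt_top p volume).ne))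
  rw [zero_mul, zero_mul, add_zero] at bound_tendsto
  refine tendsto_of_tendsto_of_tendsto_of_le_of_le tendsto_const_nhds bound_tendsto
    (fun _ => zero_le) fun k => ?_
  rw [split]
  grw [eLpNorm_schwartzMap_add_le hp, eLpNorm_schwartzMul_le,
    eLpNorm_schwartzMul_le, hχ.eLpNorm_lowPass_le hp k g]

theorem eLpNorm_block_mul_le_tsum {p : ℝ≥0∞} (hp : 1 ≤ p) (f g : 𝓢(𝔼, ℂ)) (j : ℤ) :
    eLpNorm (hχ.block j (schwartzMul f g)) p volume ≤
      ∑' k, (Set.Iic 2).indicator 1 (j - k) * (eLpNorm (𝓕⁻ hχ.annulus : 𝓢(𝔼, ℂ)) 1 volume *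
        (eLpNorm (hχ.lowPass (k + 1) g) ⊤ volume * eLpNorm (hχ.block k f) p volume +
          eLpNorm (hχ.lowPass k f) ⊤ volume * eLpNorm (hχ.block k g) p volume)) := by
  have hbot : Tendsto (fun k => eLpNorm (hχ.block j (hχ.lowPassMul k f g)) p volume) atBot
      (𝓝 0) := by
    refine tendsto_const_nhds.congr' ?_
    filter_upwards [eventually_le_atBot (j - 2)] with k hk
    rw [hχ.block_lowPassMul_eq_zero (by lia)]
    simp
  have htop : Tendsto (fun k => eLpNorm (hχ.block j (hχ.lowPassMul k f g) -
      hχ.block j (schwartzMul f g) : 𝓢(𝔼, ℂ)) p volume) atTop (𝓝 0) := by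
    have bound_tendsto := ENNReal.Tendsto.const_mul (hχ.tendsto_lowPassMul_atTop hp f g)
      (.inr (eLpNorm_lt_top (𝓕⁻ hχ.annulus) 1 volume).ne)
    rw [mul_zero] at bound_tendsto
    refine tendsto_of_tendsto_of_tendsto_of_le_of_le tendsto_const_nhds bound_tendsto
      (fun _ => zero_le) fun k => ?_
    rw [← map_sub]
    exact hχ.eLpNorm_block_le hp j _
  refine (eLpNorm_le_tsum_int_of_tendsto hp hbot htop).trans (ENNReal.tsum_le_tsum fun k => ?_)
  rcases le_or_gt (j - k) 2 with hjk | hjk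
  · rw [Set.indicator_of_mem (Set.mem_Iic.2 hjk), Pi.one_apply, one_mul, ← map_sub,
      lowPassMul_succ_sub, schwartzMul_comm (hχ.block k f)]
    grw [hχ.eLpNorm_block_le hp, eLpNorm_schwartzMap_add_le hp, eLpNorm_schwartzMul_le,
      eLpNorm_schwartzMul_le]
  · rw [hχ.block_lowPassMul_eq_zero (by lia), hχ.block_lowPassMul_eq_zero (by lia)]
    simp

theorem exists_eLpNorm_top_lowPass_mul_block_le [NeZero n] {α : ℝ} (hα : 0 < α) :
    ∃ C : ℝ≥0, ∀ (s : ℝ) (p : ℝ≥0∞) (f g : 𝓢(𝔼, ℂ)) {k l : ℤ}, l ≤ k + 1 →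
      2 ^ (k * s) * (eLpNorm (hχ.lowPass l g) ⊤ volume * eLpNorm (hχ.block k f) p volume) ≤
        C * (besovNorm χ (-α) ∞ ∞ g * (2 ^ (k * (s + α)) * eLpNorm (hχ.block k f) p volume)) := by
  obtain ⟨L, hL⟩ := hχ.exists_eLpNorm_top_lowPass_le hα
  lift (2 : ℝ≥0∞) ^ α to ℝ≥0 using
    ENNReal.rpow_ne_top_of_nonneg hα.le ENNReal.ofNat_ne_top with A hA
  refine ⟨A * L, fun s p f g k l hl => ?_⟩
  have weight_le : (2 : ℝ≥0∞) ^ ((l - k) * α) ≤ A := by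
    rw [hA]
    refine ENNReal.rpow_le_rpow_of_exponent_le one_le_two (mul_le_of_le_one_left hα.le ?_)
    rw [sub_le_iff_le_add']
    exact_mod_cast hl
  have split_weight : (k : ℝ) * s = (l - k) * α + (l * -α + k * (s + α)) := by ring
  calc 2 ^ (k * s) * (eLpNorm (hχ.lowPass l g) ⊤ volume * eLpNorm (hχ.block k f) p volume)
      = 2 ^ ((l - k) * α) * (2 ^ (l * -α) * eLpNorm (hχ.lowPass l g) ⊤ volume) *
          (2 ^ (k * (s + α)) * eLpNorm (hχ.block k f) p volume) := by
        rw [split_weight, two_rpow_add, two_rpow_add]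
        ring
    _ ≤ A * (L * besovNorm χ (-α) ∞ ∞ g) *
          (2 ^ (k * (s + α)) * eLpNorm (hχ.block k f) p volume) := by
        grw [weight_le, hL]
    _ = _ := by
        push_cast
        ring

end IsLPCutoff

theorem exists_besovNorm_mul_le [NeZero n] (hχ : IsLPCutoff χ) {s α : ℝ} (hs : 0 < s) (hα : 0 < α)
    {p q : ℝ≥0∞} (hp : 1 ≤ p) (hq : 1 ≤ q) :
    ∃ C : ℝ≥0, ∀ f g : 𝓢(𝔼, ℂ), besovNorm χ s p q (schwartzMul f g) ≤
      C * (besovNorm χ (s + α) p q f * besovNorm χ (-α) ∞ ∞ g +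
        besovNorm χ (-α) ∞ ∞ f * besovNorm χ (s + α) p q g) := by
  obtain ⟨L, hL⟩ := hχ.exists_eLpNorm_top_lowPass_mul_block_le hα
  lift ∑' m : ℤ, (2 : ℝ≥0∞) ^ (m * s) * (Set.Iic 2).indicator 1 m to ℝ≥0 using
    tsum_two_rpow_Iic_ne_top hs 2 with W hW
  lift eLpNorm (𝓕⁻ hχ.annulus : 𝓢(𝔼, ℂ)) 1 volume to ℝ≥0 using (eLpNorm_lt_top _ _ _).ne with K hK
  refine ⟨W * (K * L), fun f g => ?_⟩
  have frequency_bound (k : ℤ) : 2 ^ (k * s) * (K *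
      (eLpNorm (hχ.lowPass (k + 1) g) ⊤ volume * eLpNorm (hχ.block k f) p volume +
        eLpNorm (hχ.lowPass k f) ⊤ volume * eLpNorm (hχ.block k g) p volume)) ≤
      K * L * (besovNorm χ (-α) ∞ ∞ g *
        (2 ^ (k * (s + α)) * eLpNorm (hχ.block k f) p volume) +
          besovNorm χ (-α) ∞ ∞ f * (2 ^ (k * (s + α)) * eLpNorm (hχ.block k g) p volume)) := by
    rw [mul_left_comm, mul_add]
    grw [hL s p f g le_rfl, hL s p g f (Int.le_add_one le_rfl)]
    exact le_of_eq (by ring)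
  have hq₀ : q ≠ 0 := (zero_lt_one.trans_le hq).ne'
  have := lqNorm_weighted_le_of_le_tsum hq s (hχ.eLpNorm_block_mul_le_tsum hp f g)
  rw [← hχ.besovNorm_eq_lqNorm_block, ← hW, ← hK] at this
  grw [this, lqNorm_mono frequency_bound, lqNorm_const_mul hq₀, lqNorm_add_le hq,
    lqNorm_const_mul hq₀, lqNorm_const_mul hq₀, ← hχ.besovNorm_eq_lqNorm_block,
    ← hχ.besovNorm_eq_lqNorm_block, mul_comm (besovNorm χ (-α) ∞ ∞ g)]
  push_cast
  exact le_of_eq (by ring)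

end ProductEstimate

section EllipticEstimate

open SchwartzMap

variable {n : ℕ} {χ : EuclideanSpace ℝ (Fin n) → ℝ}

local notation "𝔼" => EuclideanSpace ℝ (Fin n)

/-- The partial derivative `∂ᵢ f` of a Schwartz function. -/
abbrev partialDeriv {F : Type*} [NormedAddCommGroup F] [NormedSpace ℝ F] (i : Fin n)
    (f : 𝓢(𝔼, F)) : 𝓢(𝔼, F) :=
  ∂_{EuclideanSpace.single i (1 : ℝ)} f

theorem fourier_partialDeriv (i : Fin n) (f : 𝓢(𝔼, ℂ)) (ξ : 𝔼) :
    𝓕 (partialDeriv i f) ξ = 2 * π * I * (ξ i * 𝓕 f ξ) := by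
  have growth : (fun x : 𝔼 => inner ℝ x (EuclideanSpace.single i (1 : ℝ))).HasTemperateGrowth := by
    fun_prop
  rw [fourier_lineDerivOp_eq, smul_apply, smulLeftCLM_apply_apply growth]
  simp [EuclideanSpace.inner_single_right]

theorem laplacian_eq_sum_partialDeriv {F : Type*} [NormedAddCommGroup F] [NormedSpace ℝ F]
    (f : 𝓢(𝔼, F)) : Δ f = ∑ i, partialDeriv i (partialDeriv i f) := by
  simpa using laplacian_eq_sum (EuclideanSpace.basisFun (Fin n) ℝ) f

theorem fourier_eq_sum_of_laplacian_eq {f : 𝓢(𝔼, ℂ)} {g : Fin n → 𝓢(𝔼, ℂ)}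
    (hfg : Δ f = ∑ i, partialDeriv i (g i)) (ξ : 𝔼) :
    2 * π * I * (‖ξ‖ ^ 2 * 𝓕 f ξ) = ∑ i, ξ i * 𝓕 (g i) ξ := by
  have := congrArg (fun h : 𝓢(𝔼, ℂ) => 𝓕 h ξ) hfg
  rw [laplacian_eq_sum_partialDeriv, FourierTransform.fourier_sum, FourierTransform.fourier_sum,
    sum_apply, sum_apply] at this
  simp only [fourier_partialDeriv, ← Finset.mul_sum] at this
  rw [mul_right_inj' two_pi_I_ne_zero] at this
  rw [← this, ← ofReal_pow, EuclideanSpace.norm_sq_eq, ofReal_sum, Finset.sum_mul, Finset.mul_sum]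
  refine Finset.sum_congr rfl fun i _ => ?_
  rw [Real.norm_eq_abs, sq_abs]
  push_cast
  ring

namespace IsLPCutoff

variable (hχ : IsLPCutoff χ)

/-- A cutoff which equals `1` on the support of `annulus` and vanishes near the origin. -/
def wideAnnulus : 𝓢(𝔼, ℂ) :=
  dyadicDilate 2 hχ.symbol - dyadicDilate (-2) hχ.symbol

theorem wideAnnulus_eq_one {ξ : 𝔼} (hξ : 3 / 4 ≤ ‖ξ‖) (hξ' : ‖ξ‖ ≤ 8 / 3) :
    hχ.wideAnnulus ξ = 1 := by
  rw [wideAnnulus, sub_apply, dyadicDilate_apply, dyadicDilate_apply, hχ.symbol_eq_one,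
    hχ.symbol_eq_zero, sub_zero]
  all_goals
    rw [norm_two_zpow_neg_smul]
    norm_num
    linarith

theorem wideAnnulus_eq_zero {ξ : 𝔼} (hξ : ‖ξ‖ ≤ 3 / 16) : hχ.wideAnnulus ξ = 0 := by
  rw [wideAnnulus, sub_apply, dyadicDilate_apply, dyadicDilate_apply, hχ.symbol_eq_one,
    hχ.symbol_eq_one, sub_self]
  all_goals
    rw [norm_two_zpow_neg_smul]
    norm_num
    linarith [norm_nonneg ξ]

theorem hasCompactSupport_wideAnnulus : HasCompactSupport hχ.wideAnnulus := by
  have hsupp : HasCompactSupport hχ.symbol := hχ.2.1.comp_left (g := ((↑) : ℝ → ℂ)) ofReal_zero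
  have hdilate (k : ℤ) : HasCompactSupport (dyadicDilate k hχ.symbol) :=
    hsupp.comp_smul (c := (2 : ℝ) ^ (-k)) (by positivity)
  exact (hdilate 2).sub (hdilate (-2))

theorem contDiff_div_normSq_mul_wideAnnulus (i : Fin n) :
    ContDiff ℝ (⊤ : ℕ∞) fun ξ : 𝔼 => (↑(ξ i / ‖ξ‖ ^ 2) : ℂ) * hχ.wideAnnulus ξ := by
  refine contDiff_iff_contDiffAt.2 fun ξ => ?_
  rcases eq_or_ne ξ 0 with rfl | hξ
  · refine contDiffAt_const (c := (0 : ℂ)) |>.congr_of_eventuallyEq ?_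
    filter_upwards [Metric.closedBall_mem_nhds (0 : 𝔼) (show (0 : ℝ) < 3 / 16 by norm_num)]
      with η hη
    rw [hχ.wideAnnulus_eq_zero (mem_closedBall_zero_iff.1 hη), mul_zero]
  · refine (ofRealCLM.contDiff.contDiffAt.comp ξ (ContDiffAt.div ?_ ?_ ?_)).mul
      hχ.wideAnnulus.smooth'.contDiffAt
    · fun_prop
    · exact (contDiff_norm_sq ℝ).contDiffAt
    · simpa using hξ

/-- The symbol `ξᵢ / (2πi |ξ|²)` of `∂ᵢ Δ⁻¹`, localised to a neighbourhood of the support of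
`annulus`. -/
def invGradSymbol (i : Fin n) : 𝓢(𝔼, ℂ) :=
  (2 * π * I)⁻¹ • (hχ.hasCompactSupport_wideAnnulus.mul_left).toSchwartzMap
    (hχ.contDiff_div_normSq_mul_wideAnnulus i)

theorem invGradSymbol_mul_annulus (i : Fin n) (ξ : 𝔼) :
    hχ.invGradSymbol i ξ * hχ.annulus ξ = (2 * π * I)⁻¹ * (ξ i / ‖ξ‖ ^ 2) * hχ.annulus ξ := by
  rcases le_or_gt ‖ξ‖ (3 / 4) with h | h
  · simp [hχ.annulus_eq_zero_of_le h]
  rcases lt_or_ge (8 / 3) ‖ξ‖ with h' | h'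
  · simp [hχ.annulus_eq_zero_of_lt h']
  · simp [invGradSymbol, hχ.wideAnnulus_eq_one h.le h']

theorem two_zpow_smul_block_eq_sum {f : 𝓢(𝔼, ℂ)} {g : Fin n → 𝓢(𝔼, ℂ)}
    (hfg : Δ f = ∑ i, partialDeriv i (g i)) (k : ℤ) :
    (2 : ℂ) ^ k • hχ.block k f =
      ∑ i, dyadicMultiplier (hχ.invGradSymbol i) k (hχ.block k (g i)) := by
  refine schwartzMap_ext_fourier fun ξ => ?_
  rw [FourierTransform.fourier_smul, FourierTransform.fourier_sum, smul_apply, sum_apply]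
  simp only [block, fourier_dyadicMultiplier, ← mul_assoc, hχ.invGradSymbol_mul_annulus]
  rcases eq_or_ne ξ 0 with rfl | hξ
  · have annulus_zero : hχ.annulus 0 = 0 := hχ.annulus_eq_zero_of_le (by norm_num)
    simp [annulus_zero]
  have hξ' : (‖ξ‖ : ℂ) ≠ 0 := by simpa using hξ
  have two_zpow_ne_zero : (2 : ℂ) ^ k ≠ 0 := zpow_ne_zero _ two_ne_zero
  have symbol_eq (i : Fin n) : (((2 : ℝ) ^ (-k) • ξ) i / ‖(2 : ℝ) ^ (-k) • ξ‖ ^ 2 : ℂ) =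
      2 ^ k * ξ i / ‖ξ‖ ^ 2 := by
    rw [norm_two_zpow_neg_smul]
    simp only [PiLp.smul_apply, smul_eq_mul, zpow_neg]
    push_cast
    field_simp
  have : 𝓕 f ξ = (2 * π * I)⁻¹ * (‖ξ‖ ^ 2 : ℂ)⁻¹ * ∑ i, ξ i * 𝓕 (g i) ξ := by
    rw [← fourier_eq_sum_of_laplacian_eq hfg]
    field_simp [two_pi_I_ne_zero]
  rw [this, smul_eq_mul, Finset.mul_sum, Finset.mul_sum, Finset.mul_sum]
  refine Finset.sum_congr rfl fun i _ => ?_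
  rw [symbol_eq]
  ring

end IsLPCutoff

theorem exists_besovNorm_le_of_laplacian_eq (hχ : IsLPCutoff χ) (s : ℝ) {p q : ℝ≥0∞} (hp : 1 ≤ p)
    (hq : 1 ≤ q) :
    ∃ C : ℝ≥0, ∀ (f : 𝓢(𝔼, ℂ)) (g : Fin n → 𝓢(𝔼, ℂ)), Δ f = ∑ i, partialDeriv i (g i) →
      besovNorm χ (s + 1) p q f ≤ C * ∑ i, besovNorm χ s p q (g i) := by
  lift ∑ i, eLpNorm (𝓕⁻ (hχ.invGradSymbol i) : 𝓢(𝔼, ℂ)) 1 volume to ℝ≥0 using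
    ENNReal.sum_ne_top.2 fun i _ => (eLpNorm_lt_top _ _ _).ne with K hK
  refine ⟨K, fun f g hfg => ?_⟩
  have symbol_le (i : Fin n) : eLpNorm (𝓕⁻ (hχ.invGradSymbol i) : 𝓢(𝔼, ℂ)) 1 volume ≤ K := by
    rw [hK]
    exact Finset.single_le_sum (f := fun i => eLpNorm (𝓕⁻ (hχ.invGradSymbol i) : 𝓢(𝔼, ℂ)) 1 volume)
      (fun _ _ => zero_le) (Finset.mem_univ i)
  have block_le (k : ℤ) : 2 ^ (k * (s + 1)) * eLpNorm (hχ.block k f) p volume ≤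
      K * ∑ i, 2 ^ (k * s) * eLpNorm (hχ.block k (g i)) p volume :=
    calc 2 ^ (k * (s + 1)) * eLpNorm (hχ.block k f) p volume
        = 2 ^ (k * s) * eLpNorm ((2 : ℂ) ^ k • hχ.block k f : 𝓢(𝔼, ℂ)) p volume := by
          have enorm_two_zpow : ‖(2 : ℂ) ^ k‖ₑ = 2 ^ (k : ℝ) := by
            rw [← ofReal_norm, norm_zpow, Complex.norm_ofNat, ← Real.rpow_intCast,
              ← ENNReal.ofReal_rpow_of_pos two_pos, ENNReal.ofReal_ofNat]
          rw [FunLike.coe_smul, eLpNorm_const_smul, enorm_two_zpow, mul_add, mul_one, two_rpow_add,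
            mul_assoc]
      _ ≤ 2 ^ (k * s) * ∑ i, K * eLpNorm (hχ.block k (g i)) p volume := by
          rw [hχ.two_zpow_smul_block_eq_sum hfg]
          grw [eLpNorm_schwartzMap_sum_le hp]
          gcongr with i
          grw [eLpNorm_dyadicMultiplier_le hp, symbol_le]
      _ = _ := by
          rw [← Finset.mul_sum, mul_left_comm, Finset.mul_sum]
  simp only [hχ.besovNorm_eq_lqNorm_block]
  grw [lqNorm_mono block_le, lqNorm_const_mul (zero_lt_one.trans_le hq).ne', lqNorm_sum_le hq]

end EllipticEstimate

section EnergyEstimate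

open SchwartzMap LineDeriv

variable {n : ℕ} {χ : EuclideanSpace ℝ (Fin n) → ℝ}

local notation "𝔼" => EuclideanSpace ℝ (Fin n)

namespace IsLPCutoff

variable (hχ : IsLPCutoff χ)

theorem enorm_annulus_le_one (ξ : 𝔼) : ‖hχ.annulus ξ‖ₑ ≤ 1 := by
  have hχ_nonneg := hχ.2.2.2.1
  have hχ_le := hχ.2.2.2.2.1
  rw [annulus_apply, symbol_apply, symbol_apply, ← ofReal_sub, ← ofReal_norm, Complex.norm_real,
    ENNReal.ofReal_le_one, Real.norm_eq_abs, abs_le]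
  constructor <;> linarith [hχ_nonneg ξ, hχ_le ξ, hχ_nonneg ((2 : ℝ)⁻¹ • ξ), hχ_le ((2 : ℝ)⁻¹ • ξ)]

theorem tsum_enorm_annulus_sq_le (ξ : 𝔼) :
    ∑' k : ℤ, ‖hχ.annulus ((2 : ℝ) ^ (-k) • ξ)‖ₑ ^ 2 ≤ 3 := by
  have bounds {k : ℤ} (hk : hχ.annulus ((2 : ℝ) ^ (-k) • ξ) ≠ 0) :
      3 / 4 * 2 ^ k < ‖ξ‖ ∧ ‖ξ‖ ≤ 8 / 3 * 2 ^ k := by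
    have hpos : (0 : ℝ) < 2 ^ k := by positivity
    rw [← lt_div_iff₀ hpos, ← div_le_iff₀ hpos, ← norm_two_zpow_neg_smul]
    exact ⟨not_le.1 (mt hχ.annulus_eq_zero_of_le hk), not_lt.1 (mt hχ.annulus_eq_zero_of_lt hk)⟩
  have scales_close {k l : ℤ} (hk : hχ.annulus ((2 : ℝ) ^ (-k) • ξ) ≠ 0)
      (hl : hχ.annulus ((2 : ℝ) ^ (-l) • ξ) ≠ 0) : k < l + 2 := by
    rw [← zpow_lt_zpow_iff_right₀ (one_lt_two (α := ℝ)), zpow_add₀ two_ne_zero]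
    have : (0 : ℝ) < 2 ^ l := by positivity
    linarith [(bounds hk).1, (bounds hl).2]
  by_cases h : ∀ k : ℤ, hχ.annulus ((2 : ℝ) ^ (-k) • ξ) = 0
  · simp only [h, enorm_zero, ne_eq, OfNat.ofNat_ne_zero, not_false_eq_true, zero_pow, tsum_zero,
      zero_le]
  obtain ⟨l, hl⟩ := not_forall.1 h
  rw [tsum_eq_sum (s := Finset.Icc (l - 1) (l + 1))]
  · grw [Finset.sum_le_card_nsmul _ _ 1 fun k _ => pow_le_one₀ zero_le (hχ.enorm_annulus_le_one _)]
    have : l + 1 + 1 - (l - 1) = 3 := by ring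
    simp [this]
  · intro k hk
    by_contra hne
    have hk_ne : hχ.annulus ((2 : ℝ) ^ (-k) • ξ) ≠ 0 := by simpa using hne
    have := scales_close hk_ne hl
    have := scales_close hl hk_ne
    rw [Finset.mem_Icc] at hk
    lia

end IsLPCutoff

theorem eLpNorm_two_sq_eq_lintegral {α ε : Type*} {_ : MeasurableSpace α} [ENorm ε] {μ : Measure α}
    (f : α → ε) : eLpNorm f 2 μ ^ (2 : ℝ) = ∫⁻ x, ‖f x‖ₑ ^ 2 ∂μ := by
  simpa using eLpNorm_nnreal_pow_eq_lintegral (f := f) (μ := μ) (p := 2) two_ne_zero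

theorem besovNorm_zero_two_two_le (hχ : IsLPCutoff χ) (f : 𝓢(𝔼, ℂ)) :
    besovNorm χ 0 2 2 f ≤ 2 * eLpNorm f 2 volume := by
  have hsq : besovNorm χ 0 2 2 f ^ (2 : ℝ) ≤ (2 * eLpNorm f 2 volume) ^ (2 : ℝ) :=
    calc besovNorm χ 0 2 2 f ^ (2 : ℝ)
        = ∑' k, eLpNorm (𝓕 (hχ.block k f) : 𝓢(𝔼, ℂ)) 2 volume ^ (2 : ℝ) := by
          rw [hχ.besovNorm_eq_lqNorm_block, lqNorm, if_neg ENNReal.ofNat_ne_top, ← ENNReal.rpow_mul]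
          simp [eLpNorm_two_fourier]
      _ = ∫⁻ ξ, (∑' k : ℤ, ‖hχ.annulus ((2 : ℝ) ^ (-k) • ξ)‖ₑ ^ 2) * ‖𝓕 f ξ‖ₑ ^ 2 := by
          simp only [eLpNorm_two_sq_eq_lintegral, IsLPCutoff.block, fourier_dyadicMultiplier,
            enorm_mul, mul_pow, ← ENNReal.tsum_mul_right]
          rw [lintegral_tsum fun k => by fun_prop]
      _ ≤ ∫⁻ ξ, 4 * ‖𝓕 f ξ‖ₑ ^ 2 := by
          gcongr with ξ
          exact (hχ.tsum_enorm_annulus_sq_le ξ).trans (by norm_num)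
      _ = (2 * eLpNorm f 2 volume) ^ (2 : ℝ) := by
          rw [lintegral_const_mul' _ _ ENNReal.ofNat_ne_top, ← eLpNorm_two_sq_eq_lintegral,
            eLpNorm_two_fourier, ENNReal.mul_rpow_of_nonneg _ _ zero_le_two]
          norm_num
  exact (ENNReal.rpow_le_rpow_iff two_pos).1 hsq

theorem exists_besovNorm_one_le_of_laplacian_eq (hχ : IsLPCutoff χ) :
    ∃ C : ℝ≥0, ∀ (f : 𝓢(𝔼, ℂ)) (g : Fin n → 𝓢(𝔼, ℂ)), Δ f = ∑ i, partialDeriv i (g i) →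
      besovNorm χ 1 2 2 f ≤ C * ∑ i, eLpNorm (g i) 2 volume := by
  obtain ⟨C, hC⟩ := exists_besovNorm_le_of_laplacian_eq hχ 0 one_le_two one_le_two
  refine ⟨C * 2, fun f g hfg => ?_⟩
  rw [zero_add] at hC
  grw [hC f g hfg, Finset.sum_le_sum fun i _ => besovNorm_zero_two_two_le hχ (g i),
    ← Finset.mul_sum, ← mul_assoc]
  push_cast
  rfl

theorem partialDeriv_comm (i j : Fin n) (f : 𝓢(𝔼, ℂ)) :
    partialDeriv i (partialDeriv j f) = partialDeriv j (partialDeriv i f) := by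
  refine schwartzMap_ext_fourier fun ξ => ?_
  simp only [fourier_partialDeriv]
  ring

theorem laplacian_eq_sum_partialDeriv_antisymm {U : Fin n → 𝓢(𝔼, ℂ)}
    (hU : ∑ i, partialDeriv i (U i) = 0) (j : Fin n) :
    Δ (U j) = ∑ i, partialDeriv i (partialDeriv i (U j) - partialDeriv j (U i)) := by
  have sum_comm : ∑ i, partialDeriv i (partialDeriv j (U i)) = 0 := by
    simp only [partialDeriv_comm _ j]
    rw [← lineDerivOp_sum, hU, lineDerivOp_zero]
  simp only [sub_eq_add_neg, lineDerivOp_add, lineDerivOp_neg, Finset.sum_add_distrib,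
    Finset.sum_neg_distrib]
  rw [laplacian_eq_sum_partialDeriv, sum_comm, neg_zero, add_zero]

end EnergyEstimate

section Vorticity

open SchwartzMap LineDeriv

variable {χ : E3 → ℝ}

/-- A real Schwartz function viewed as a complex one. -/
def complexify : 𝓢(E3, ℝ) →L[ℝ] 𝓢(E3, ℂ) :=
  postcompCLM ofRealCLM

@[simp]
theorem complexify_apply (f : 𝓢(E3, ℝ)) (x : E3) : complexify f x = f x := rfl

theorem eLpNorm_complexify (f : 𝓢(E3, ℝ)) (p : ℝ≥0∞) :
    eLpNorm (complexify f) p volume = eLpNorm f p volume :=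
  eLpNorm_congr_norm_ae (.of_forall fun x => by simp)

theorem coe_schwartzMul_complexify (f g : 𝓢(E3, ℝ)) :
    ⇑(schwartzMul (complexify f) (complexify g)) = fun x => ((f x * g x : ℝ) : ℂ) := by
  ext x
  simp

theorem partialDeriv_complexify (i : Fin 3) (f : 𝓢(E3, ℝ)) :
    partialDeriv i (complexify f) = complexify (partialDeriv i f) := by
  ext x
  rw [complexify_apply, lineDerivOp_apply_eq_fderiv, lineDerivOp_apply_eq_fderiv]
  exact DFunLike.congr_fun (ofRealCLM.hasFDerivAt.comp x f.differentiableAt.hasFDerivAt).fderiv _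

theorem coe_partialDeriv (i : Fin 3) (f : 𝓢(E3, ℝ)) : ⇑(partialDeriv i f) = pd i f := by
  ext x
  exact lineDerivOp_apply_eq_fderiv ..

theorem sum_partialDeriv_complexify_eq_zero {u : Fin 3 → 𝓢(E3, ℝ)}
    (hu : ∀ x, ∑ i : Fin 3, pd i (u i) x = 0) : ∑ i, partialDeriv i (complexify (u i)) = 0 := by
  simp only [partialDeriv_complexify, ← map_sum]
  ext x
  simpa [coe_partialDeriv] using congrArg ofReal (hu x)

/-- The vorticity `curl u` as a Schwartz vector field. -/
def vorticity (u : Fin 3 → 𝓢(E3, ℝ)) : Fin 3 → 𝓢(E3, ℝ) :=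
  ![partialDeriv 1 (u 2) - partialDeriv 2 (u 1),
    partialDeriv 2 (u 0) - partialDeriv 0 (u 2),
    partialDeriv 0 (u 1) - partialDeriv 1 (u 0)]

theorem coe_vorticity (u : Fin 3 → 𝓢(E3, ℝ)) (i : Fin 3) : ⇑(vorticity u i) = curlS u i := by
  ext x
  fin_cases i <;> simp [vorticity, curlS, curl3, coe_partialDeriv]

theorem exists_partialDeriv_sub_eq_smul_vorticity (u : Fin 3 → 𝓢(E3, ℝ)) (i j : Fin 3) :
    ∃ (k : Fin 3) (c : ℝ), ‖c‖ₑ ≤ 1 ∧ partialDeriv i (complexify (u j)) -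
      partialDeriv j (complexify (u i)) = c • complexify (vorticity u k) := by
  simp only [partialDeriv_complexify, ← map_sub, ← map_smul]
  suffices ∃ (k : Fin 3) (c : ℝ), ‖c‖ₑ ≤ 1 ∧
      partialDeriv i (u j) - partialDeriv j (u i) = c • vorticity u k by
    obtain ⟨k, c, hc, h⟩ := this
    exact ⟨k, c, hc, congrArg _ h⟩
  fin_cases i <;> fin_cases j
  · exact ⟨0, 0, by simp, by simp⟩
  · exact ⟨2, 1, by simp, by simp [vorticity]⟩
  · exact ⟨1, -1, by simp, by simp [vorticity]⟩
  · exact ⟨2, -1, by simp, by simp [vorticity]⟩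
  · exact ⟨0, 0, by simp, by simp⟩
  · exact ⟨0, 1, by simp, by simp [vorticity]⟩
  · exact ⟨1, 1, by simp, by simp [vorticity]⟩
  · exact ⟨0, -1, by simp, by simp [vorticity]⟩
  · exact ⟨0, 0, by simp, by simp⟩

theorem besovNorm_real_smul (hχ : IsLPCutoff χ) (s : ℝ) (p : ℝ≥0∞) {q : ℝ≥0∞} (hq : q ≠ 0)
    (c : ℝ) (f : 𝓢(E3, ℂ)) :
    besovNorm χ s p q (c • f : 𝓢(E3, ℂ)) = ‖c‖ₑ * besovNorm χ s p q f := by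
  have block_smul (k : ℤ) : hχ.block k (c • f) = c • hχ.block k f := by simp
  rw [hχ.besovNorm_eq_lqNorm_block, hχ.besovNorm_eq_lqNorm_block]
  simp only [block_smul, FunLike.coe_smul, eLpNorm_const_smul,
    mul_left_comm _ ‖c‖ₑ, lqNorm_const_mul hq]

theorem vecBesovInf_eq_iSup_besovNorm (s : ℝ) (v : Fin 3 → E3 → ℝ) :
    vecBesovInf χ s v = ⨆ i, besovNorm χ s ∞ ∞ fun x => (v i x : ℂ) := by
  simp [vecBesovInf, besovNorm, lqNorm]

theorem besovNorm_vorticity_le (s : ℝ) (u : Fin 3 → 𝓢(E3, ℝ)) (i : Fin 3) :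
    besovNorm χ s ∞ ∞ (complexify (vorticity u i)) ≤ vecBesovInf χ s (curlS u) := by
  simp_rw [vecBesovInf_eq_iSup_besovNorm, ← coe_vorticity]
  exact le_iSup (fun i => besovNorm χ s ∞ ∞ fun x => (vorticity u i x : ℂ)) i

theorem eLpNorm_le_vecL2 (v : Fin 3 → E3 → ℝ) (i : Fin 3) : eLpNorm (v i) 2 volume ≤ vecL2 v := by
  rw [vecL2, one_div, ENNReal.le_rpow_inv_iff two_pos]
  exact Finset.single_le_sum (f := fun i => eLpNorm (v i) 2 volume ^ (2 : ℝ))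
    (fun _ _ => zero_le) (Finset.mem_univ i)

theorem eLpNorm_pd_le_gradL2 (v : Fin 3 → E3 → ℝ) (i j : Fin 3) :
    eLpNorm (pd i (v j)) 2 volume ≤ gradL2 v := by
  rw [gradL2, one_div, ENNReal.le_rpow_inv_iff two_pos]
  calc eLpNorm (pd i (v j)) 2 volume ^ (2 : ℝ)
    _ ≤ ∑ j, eLpNorm (pd i (v j)) 2 volume ^ (2 : ℝ) :=
        Finset.single_le_sum (f := fun j => eLpNorm (pd i (v j)) 2 volume ^ (2 : ℝ))
          (fun _ _ => zero_le) (Finset.mem_univ j)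
    _ ≤ ∑ i, ∑ j, eLpNorm (pd i (v j)) 2 volume ^ (2 : ℝ) :=
        Finset.single_le_sum (f := fun i => ∑ j, eLpNorm (pd i (v j)) 2 volume ^ (2 : ℝ))
          (fun _ _ => zero_le) (Finset.mem_univ i)

theorem matBesov22_le {s : ℝ} {m : Fin 3 → Fin 3 → E3 → ℝ} {B : ℝ≥0∞}
    (h : ∀ i j, besovNorm χ s 2 2 (fun x => (m i j x : ℂ)) ≤ B) : matBesov22 χ s m ≤ 3 * B := by
  have : matBesov22 χ s m ^ (2 : ℝ) ≤ (3 * B) ^ (2 : ℝ) := by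
    rw [matBesov22, ← ENNReal.rpow_mul, one_div, inv_mul_cancel₀ two_ne_zero, ENNReal.rpow_one,
      ENNReal.mul_rpow_of_nonneg _ _ zero_le_two]
    grw [Finset.sum_le_sum fun i _ => Finset.sum_le_sum fun j _ =>
      ENNReal.rpow_le_rpow (h i j) zero_le_two]
    simp [← mul_assoc]
    norm_num
  exact (ENNReal.rpow_le_rpow_iff two_pos).1 this

theorem exists_besovNorm_velocity_le (hχ : IsLPCutoff χ) (s : ℝ) :
    ∃ C : ℝ≥0, ∀ u : Fin 3 → 𝓢(E3, ℝ), (∀ x, ∑ i : Fin 3, pd i (u i) x = 0) → ∀ j,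
      besovNorm χ (s + 1) ∞ ∞ (complexify (u j)) ≤ C * vecBesovInf χ s (curlS u) := by
  obtain ⟨C, hC⟩ := exists_besovNorm_le_of_laplacian_eq hχ s (p := ∞) (q := ∞) le_top le_top
  refine ⟨C * 3, fun u hu j => ?_⟩
  have entry_le (i : Fin 3) : besovNorm χ s ∞ ∞ (partialDeriv i (complexify (u j)) -
      partialDeriv j (complexify (u i)) : 𝓢(E3, ℂ)) ≤ vecBesovInf χ s (curlS u) := by
    obtain ⟨k, c, hc, h⟩ := exists_partialDeriv_sub_eq_smul_vorticity u i j
    rw [h, besovNorm_real_smul hχ _ _ ENNReal.top_ne_zero]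
    grw [hc, one_mul, besovNorm_vorticity_le]
  grw [hC _ _ (laplacian_eq_sum_partialDeriv_antisymm (sum_partialDeriv_complexify_eq_zero hu) j),
    Finset.sum_le_sum fun i _ => entry_le i]
  simp [mul_assoc]

theorem exists_besovNorm_one_velocity_le (hχ : IsLPCutoff χ) :
    ∃ C : ℝ≥0, ∀ u : Fin 3 → 𝓢(E3, ℝ), (∀ x, ∑ i : Fin 3, pd i (u i) x = 0) → ∀ j,
      besovNorm χ 1 2 2 (complexify (u j)) ≤ C * vecL2 (curlS u) := by
  obtain ⟨C, hC⟩ := exists_besovNorm_one_le_of_laplacian_eq hχ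
  refine ⟨C * 3, fun u hu j => ?_⟩
  have entry_le (i : Fin 3) : eLpNorm (partialDeriv i (complexify (u j)) -
      partialDeriv j (complexify (u i)) : 𝓢(E3, ℂ)) 2 volume ≤ vecL2 (curlS u) := by
    obtain ⟨k, c, hc, h⟩ := exists_partialDeriv_sub_eq_smul_vorticity u i j
    rw [h, FunLike.coe_smul, eLpNorm_const_smul, eLpNorm_complexify, coe_vorticity]
    grw [hc, one_mul, eLpNorm_le_vecL2]
  grw [hC _ _ (laplacian_eq_sum_partialDeriv_antisymm (sum_partialDeriv_complexify_eq_zero hu) j),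
    Finset.sum_le_sum fun i _ => entry_le i]
  simp [mul_assoc]

theorem exists_besovNorm_one_vorticity_le (hχ : IsLPCutoff χ) :
    ∃ C : ℝ≥0, ∀ (u : Fin 3 → 𝓢(E3, ℝ)) (j : Fin 3),
      besovNorm χ 1 2 2 (complexify (vorticity u j)) ≤ C * gradL2 (curlS u) := by
  obtain ⟨C, hC⟩ := exists_besovNorm_one_le_of_laplacian_eq hχ
  refine ⟨C * 3, fun u j => ?_⟩
  have entry_le (i : Fin 3) :
      eLpNorm (partialDeriv i (complexify (vorticity u j))) 2 volume ≤ gradL2 (curlS u) := by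
    rw [partialDeriv_complexify, eLpNorm_complexify, coe_partialDeriv, coe_vorticity]
    exact eLpNorm_pd_le_gradL2 _ i j
  grw [hC _ _ (laplacian_eq_sum_partialDeriv _), Finset.sum_le_sum fun i _ => entry_le i]
  simp [mul_assoc]

end Vorticity

/-- **Estimate (3.8)**: for `0 < α < 1` there is a constant `C > 0` such that for every
divergence-free Schwartz vector field `u` on `ℝ³` with vorticity `ω = curl u`,
`‖ω ⊗ u‖_{Ḃ^{1-α}_{2,2}} ≤ C (‖∇ω‖_{L²} ‖ω‖_{Ḃ^{-1-α}_{∞,∞}} +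
‖ω‖_{Ḃ^{-α}_{∞,∞}} ‖ω‖_{L²})`. -/
theorem tensor_product_besov_estimate
    (χ : E3 → ℝ) (hχ : IsLPCutoff χ) (α : ℝ) (hα : 0 < α) (hα1 : α < 1) :
    ∃ C : ℝ≥0∞, 0 < C ∧ C < ∞ ∧
      ∀ u : Fin 3 → 𝓢(E3, ℝ), (∀ x, ∑ i : Fin 3, pd i (⇑(u i)) x = 0) →
        matBesov22 χ (1 - α) (fun i j x => curlS u i x * u j x) ≤
          C * (gradL2 (curlS u) * vecBesovInf χ (-1 - α) (curlS u)
            + vecBesovInf χ (-α) (curlS u) * vecL2 (curlS u)) := by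
  obtain ⟨C₁, product_le⟩ := exists_besovNorm_mul_le hχ (sub_pos.2 hα1) hα one_le_two one_le_two
  obtain ⟨C₂, gradVorticity_le⟩ := exists_besovNorm_one_vorticity_le hχ
  obtain ⟨C₃, velocity_le⟩ := exists_besovNorm_velocity_le hχ (-1 - α)
  obtain ⟨C₄, gradVelocity_le⟩ := exists_besovNorm_one_velocity_le hχ
  rw [sub_add_cancel] at product_le
  rw [show -1 - α + 1 = -α by ring] at velocity_le
  refine ⟨(3 * (C₁ * (C₂ * C₃ + C₄)) + 1 : ℝ≥0), by positivity, ENNReal.coe_lt_top, fun u hu => ?_⟩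
  set A := gradL2 (curlS u) * vecBesovInf χ (-1 - α) (curlS u)
  set B := vecBesovInf χ (-α) (curlS u) * vecL2 (curlS u)
  have entry_le (i j : Fin 3) : besovNorm χ (1 - α) 2 2 (fun x => ((curlS u i x * u j x : ℝ) : ℂ)) ≤
      C₁ * (C₂ * C₃ + C₄) * (A + B) := by
    rw [← coe_vorticity, ← coe_schwartzMul_complexify]
    grw [product_le, gradVorticity_le, velocity_le u hu, gradVelocity_le u hu,
      besovNorm_vorticity_le]
    refine le_self_add.trans_eq (b := _ + C₁ * (C₂ * C₃ * B + C₄ * A)) ?_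
    ring
  grw [matBesov22_le entry_le, ← mul_assoc]
  gcongr
  simp
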